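/- The spectral Fejér kernel is a good kernel: K_{m_Λ} ≥ 0, ∫_{T^d} K_{m_Λ} = 1, and for every δ > 0, ∫_{T^d \ B_δ(0)} K_{m_Λ}(x) dx → 0 as Λ → ∞. -/

import Mathlib

open MeasureTheory Filter

noncomputable instance : Fact ((0 : ℝ) < 2 * Real.pi) := ⟨by positivity⟩

/-- The `d`-torus `ℝ^d / 2πℤ^d`. -/
abbrev Torus (d : ℕ) := Fin d → AddCircle (2 * Real.pi)

/-- Euclidean norm of a lattice point in `ℤ^d`. -/
noncomputable def euclNormZ {d : ℕ} (n : Fin d → ℤ) : ℝ :=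
  Real.sqrt (∑ i, ((n i : ℝ)) ^ 2)

/-- The character `e^{i n·x}` on the torus. -/
noncomputable def torusChar {d : ℕ} (n : Fin d → ℤ) (x : Torus d) : ℂ :=
  ∏ i, ((AddCircle.toCircle ((n i) • (x i)) : Circle) : ℂ)

/-!
For a finite set `S ⊆ ℤ^d`, orthogonality of characters computes the Fourier coefficients of the
Fejér kernel of `S`; in particular `∫ (1 - cos x_i) K_S(x) dx` is the proportion of points `k ∈ S`
with `k - e_i ∉ S`. Since `∑ i, (1 - cos x_i)` is bounded below by a positive constant away from
`0`, the mass of `K_S` there is controlled by these proportions. In a ball of radius `Λ` a point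
with `k - e_i` outside the ball is the lowest point of its line in direction `e_i`, so there are
`O(Λ^(d-1))` of them among at least `c Λ^d` lattice points.
-/

open scoped Finset ComplexConjugate Topology

section Concentration

variable {X ι : Type*} [TopologicalSpace X] [MeasurableSpace X] {μ : Measure X}

lemma integrable_of_continuous [CompactSpace X] [OpensMeasurableSpace X]
    [IsFiniteMeasureOnCompacts μ] {E : Type*} [NormedAddCommGroup E]
    [SecondCountableTopologyEither X E] {f : X → E} (hf : Continuous f) : Integrable f μ :=
  hf.integrable_of_hasCompactSupport (.of_compactSpace f)

lemma tendsto_setIntegral_zero_of_tendsto_integral_mul {l : Filter ι} {f : ι → X → ℝ} {g : X → ℝ}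
    {s : Set X} (hs : IsCompact s) (hsm : MeasurableSet s) (hgs : ContinuousOn g s)
    (hg_pos : ∀ x ∈ s, 0 < g x) (hg : 0 ≤ g) (hf : ∀ a, 0 ≤ f a)
    (hfs : ∀ a, IntegrableOn (f a) s μ) (hfg : ∀ a, Integrable (fun x ↦ f a x * g x) μ)
    (hlim : Tendsto (fun a ↦ ∫ x, f a x * g x ∂μ) l (𝓝 0)) :
    Tendsto (fun a ↦ ∫ x in s, f a x ∂μ) l (𝓝 0) := by
  obtain ⟨c, hc, hcg⟩ := hs.exists_forall_le' hgs hg_pos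
  have markov (a : ι) : ∫ x in s, f a x ∂μ ≤ c⁻¹ * ∫ x, f a x * g x ∂μ := by
    rw [← div_eq_inv_mul, le_div_iff₀ hc, ← integral_mul_const]
    calc ∫ x in s, f a x * c ∂μ ≤ ∫ x in s, f a x * g x ∂μ :=
          setIntegral_mono_on ((hfs a).mul_const c) (hfg a).integrableOn hsm fun x hx ↦
            mul_le_mul_of_nonneg_left (hcg x hx) (hf a x)
      _ ≤ ∫ x, f a x * g x ∂μ :=
          setIntegral_le_integral (hfg a) (.of_forall fun x ↦ mul_nonneg (hf a x) (hg x))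
  exact squeeze_zero (fun a ↦ integral_nonneg (hf a)) markov
    (by simpa only [mul_zero] using hlim.const_mul c⁻¹)

end Concentration

section Characters

variable {d : ℕ}

lemma torusChar_zero (x : Torus d) : torusChar 0 x = 1 := by
  simp [torusChar]

lemma torusChar_add (m n : Fin d → ℤ) (x : Torus d) :
    torusChar (m + n) x = torusChar m x * torusChar n x := by
  simp [torusChar, add_smul, AddCircle.toCircle_add, Finset.prod_mul_distrib]

lemma torusChar_neg (n : Fin d → ℤ) (x : Torus d) : torusChar (-n) x = conj (torusChar n x) := by
  simp only [torusChar, map_prod, Pi.neg_apply, neg_smul, AddCircle.toCircle_neg,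
    Circle.coe_inv_eq_conj]

lemma torusChar_single_one (i : Fin d) (x : Torus d) :
    torusChar (Pi.single i 1) x = (AddCircle.toCircle (x i) : ℂ) := by
  rw [torusChar, Finset.prod_eq_single i (by simp +contextual) (by simp)]
  simp

lemma norm_torusChar (n : Fin d → ℤ) (x : Torus d) : ‖torusChar n x‖ = 1 := by
  simp only [torusChar, norm_prod, Circle.norm_coe, Finset.prod_const_one]

lemma re_torusChar_le_one (n : Fin d → ℤ) (x : Torus d) : (torusChar n x).re ≤ 1 :=
  (Complex.re_le_norm _).trans_eq (norm_torusChar n x)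

lemma torusChar_eq_one_of_re_eq_one {n : Fin d → ℤ} {x : Torus d} (h : (torusChar n x).re = 1) :
    torusChar n x = 1 := by
  have hre : (torusChar n x).re = ‖torusChar n x‖ := h.trans (norm_torusChar n x).symm
  rw [Complex.eq_coe_norm_of_nonneg (Complex.re_eq_norm.mp hre), norm_torusChar, Complex.ofReal_one]

@[fun_prop]
lemma continuous_torusChar (n : Fin d → ℤ) : Continuous (torusChar n) := by
  unfold torusChar
  exact continuous_finsetProd _ fun i _ ↦
    (map_continuous (fourier (n i))).comp (continuous_apply i)

lemma torusChar_add_single {n : Fin d → ℤ} {i : Fin d} (hi : n i ≠ 0) (x : Torus d) :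
    torusChar n (x + Pi.single i ↑(2 * Real.pi / 2 / n i)) = -torusChar n x := by
  have half_period := fourier_add_half_inv_index hi Real.two_pi_pos (x i)
  simp only [fourier_apply] at half_period
  simp only [torusChar, ← Finset.mul_prod_erase _ _ (Finset.mem_univ i), Pi.add_apply,
    Pi.single_eq_same, half_period, neg_mul]
  congr 2
  exact Finset.prod_congr rfl fun j hj ↦ by simp [Finset.ne_of_mem_erase hj]

lemma integral_torusChar (μ : Measure (Torus d)) [μ.IsAddRightInvariant] [IsProbabilityMeasure μ]
    (n : Fin d → ℤ) : ∫ x, torusChar n x ∂μ = if n = 0 then 1 else 0 := by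
  split_ifs with hn
  · simp [hn, torusChar_zero]
  · obtain ⟨i, hi⟩ := Function.ne_iff.mp hn
    exact integral_eq_zero_of_add_right_eq_neg (torusChar_add_single hi)

end Characters

section FejerKernel

variable {d : ℕ}

/-- The Fejér kernel `|∑_{k ∈ S} e^{i k·x}|² / #S` of a finite set `S` of frequencies. It is `0`
for `S = ∅`. -/
noncomputable def fejerKernel (S : Finset (Fin d → ℤ)) (x : Torus d) : ℝ :=
  (1 / (#S : ℝ)) * Complex.normSq (∑ k ∈ S, torusChar k x)

/-- The proportion of points of `S` that leave `S` under translation by `-n`. For the lattice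
points of a ball this is `1 - m_Λ(n)`, where `m_Λ(n) = #(S ∩ (S + n)) / #S`. It is `0` for
`S = ∅`. -/
noncomputable def boundaryRatio (S : Finset (Fin d → ℤ)) (n : Fin d → ℤ) : ℝ :=
  (#{k ∈ S | k - n ∉ S} : ℝ) / #S

lemma fejerKernel_nonneg (S : Finset (Fin d → ℤ)) : 0 ≤ fejerKernel S := fun _ ↦
  mul_nonneg (by positivity) (Complex.normSq_nonneg _)

@[fun_prop]
lemma continuous_fejerKernel (S : Finset (Fin d → ℤ)) : Continuous (fejerKernel S) := by
  unfold fejerKernel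
  exact continuous_const.mul (Complex.continuous_normSq.comp (by fun_prop))

lemma normSq_sum_torusChar_mul (S : Finset (Fin d → ℤ)) (n : Fin d → ℤ) (x : Torus d) :
    (Complex.normSq (∑ k ∈ S, torusChar k x) : ℂ) * torusChar n x =
      ∑ k ∈ S, ∑ l ∈ S, torusChar (l - (k - n)) x := by
  rw [Complex.normSq_eq_conj_mul_self, map_sum, Finset.sum_mul_sum]
  simp only [Finset.sum_mul, sub_eq_add_neg, neg_add_rev, neg_neg, torusChar_add, torusChar_neg]
  exact Finset.sum_congr rfl fun k _ ↦ Finset.sum_congr rfl fun l _ ↦ by ring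

variable (μ : Measure (Torus d)) [μ.IsAddRightInvariant] [IsProbabilityMeasure μ]

lemma integral_fejerKernel_mul_torusChar (S : Finset (Fin d → ℤ)) (n : Fin d → ℤ) :
    ∫ x, (fejerKernel S x : ℂ) * torusChar n x ∂μ = (#{k ∈ S | k - n ∈ S} : ℂ) / #S := by
  have hint (m : Fin d → ℤ) : Integrable (torusChar m) μ :=
    integrable_of_continuous (continuous_torusChar m)
  simp only [fejerKernel, Complex.ofReal_mul, mul_assoc, normSq_sum_torusChar_mul]
  rw [integral_const_mul, integral_finsetSum _ fun k _ ↦ integrable_finsetSum _ fun _ _ ↦ hint _]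
  simp only [integral_finsetSum _ fun _ _ ↦ hint _, integral_torusChar, sub_eq_zero,
    Finset.sum_ite_eq', Finset.sum_boole]
  push_cast
  ring

lemma integral_fejerKernel_mul_re_torusChar (S : Finset (Fin d → ℤ)) (n : Fin d → ℤ) :
    ∫ x, fejerKernel S x * (torusChar n x).re ∂μ = (#{k ∈ S | k - n ∈ S} : ℝ) / #S := by
  have hint : Integrable (fun x ↦ (fejerKernel S x : ℂ) * torusChar n x) μ :=
    integrable_of_continuous (by fun_prop)
  calc ∫ x, fejerKernel S x * (torusChar n x).re ∂μ
      = (∫ x, (fejerKernel S x : ℂ) * torusChar n x ∂μ).re := by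
        simpa only [RCLike.re_eq_complex_re, Complex.re_ofReal_mul] using integral_re hint
    _ = (#{k ∈ S | k - n ∈ S} : ℝ) / #S := by
        rw [integral_fejerKernel_mul_torusChar, Complex.div_natCast_re, Complex.natCast_re]

lemma integral_fejerKernel {S : Finset (Fin d → ℤ)} (hS : S.Nonempty) :
    ∫ x, fejerKernel S x ∂μ = 1 := by
  have hcard : (#S : ℝ) ≠ 0 := by exact_mod_cast hS.card_ne_zero
  simpa [torusChar_zero, Finset.filter_mem_eq_inter, hcard]
    using integral_fejerKernel_mul_re_torusChar μ S 0

lemma integral_fejerKernel_mul_one_sub_re (S : Finset (Fin d → ℤ)) (n : Fin d → ℤ) :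
    ∫ x, fejerKernel S x * (1 - (torusChar n x).re) ∂μ = boundaryRatio S n := by
  obtain rfl | hS := S.eq_empty_or_nonempty
  · simp [fejerKernel, boundaryRatio]
  have hcard : (#S : ℝ) ≠ 0 := by exact_mod_cast hS.card_ne_zero
  have hsplit : (#{k ∈ S | k - n ∈ S} : ℝ) + #{k ∈ S | k - n ∉ S} = #S := by
    exact_mod_cast Finset.card_filter_add_card_filter_not (s := S) (fun k ↦ k - n ∈ S)
  simp only [mul_sub, mul_one]
  rw [integral_sub (integrable_of_continuous (by fun_prop))
      (integrable_of_continuous (by fun_prop)), integral_fejerKernel μ hS,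
    integral_fejerKernel_mul_re_torusChar, boundaryRatio, eq_div_iff hcard, sub_mul,
    div_mul_cancel₀ _ hcard]
  linarith

/-- The function `∑ i, (1 - cos x_i)`, a trigonometric polynomial vanishing only at `0`, against
which the concentration of Fejér kernels is tested. -/
noncomputable def versineSum (x : Torus d) : ℝ :=
  ∑ i, (1 - (torusChar (Pi.single i 1) x).re)

@[fun_prop]
lemma continuous_versineSum : Continuous (versineSum (d := d)) := by
  unfold versineSum
  fun_prop

lemma versineSum_nonneg : 0 ≤ versineSum (d := d) := fun x ↦
  Finset.sum_nonneg fun _ _ ↦ sub_nonneg.mpr (re_torusChar_le_one _ x)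

lemma versineSum_eq_zero_iff {x : Torus d} : versineSum x = 0 ↔ x = 0 := by
  refine ⟨fun h ↦ funext fun i ↦ ?_, fun h ↦ by simp [h, versineSum, torusChar_single_one]⟩
  have hre := (Finset.sum_eq_zero_iff_of_nonneg fun _ _ ↦
    sub_nonneg.mpr (re_torusChar_le_one _ x)).mp h i (Finset.mem_univ i)
  have hchar := torusChar_eq_one_of_re_eq_one (sub_eq_zero.mp hre).symm
  apply AddCircle.injective_toCircle Real.two_pi_pos.ne'
  rw [Pi.zero_apply, AddCircle.toCircle_zero]
  exact Circle.ext (by rwa [← torusChar_single_one])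

lemma integral_fejerKernel_mul_versineSum (S : Finset (Fin d → ℤ)) :
    ∫ x, fejerKernel S x * versineSum x ∂μ = ∑ i, boundaryRatio S (Pi.single i 1) := by
  simp only [versineSum, Finset.mul_sum]
  rw [integral_finsetSum _ fun i _ ↦ integrable_of_continuous (by fun_prop)]
  simp only [integral_fejerKernel_mul_one_sub_re]

theorem tendsto_setIntegral_fejerKernel {α : Type*} {l : Filter α} {S : α → Finset (Fin d → ℤ)}
    (hS : ∀ i, Tendsto (fun a ↦ boundaryRatio (S a) (Pi.single i 1)) l (𝓝 0))
    {E : Set (Torus d)} (hE : IsClosed E) (h0 : 0 ∉ E) :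
    Tendsto (fun a ↦ ∫ x in E, fejerKernel (S a) x ∂μ) l (𝓝 0) := by
  refine tendsto_setIntegral_zero_of_tendsto_integral_mul hE.isCompact hE.measurableSet
    continuous_versineSum.continuousOn (fun x hx ↦ ?_) versineSum_nonneg
    (fun a ↦ fejerKernel_nonneg (S a))
    (fun a ↦ (integrable_of_continuous (by fun_prop)).integrableOn)
    (fun a ↦ integrable_of_continuous (by fun_prop)) ?_
  · have hx0 : x ≠ 0 := ne_of_mem_of_not_mem hx h0
    exact (versineSum_nonneg x).lt_of_ne' (mt versineSum_eq_zero_iff.mp hx0)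
  · simpa only [integral_fejerKernel_mul_versineSum, Finset.sum_const_zero]
      using tendsto_finsetSum Finset.univ fun i _ ↦ hS i

end FejerKernel

section LatticePoints

lemma card_Icc_neg_natCast {ι : Type*} [Fintype ι] [DecidableEq ι] (N : ℕ) :
    #(Finset.Icc (fun _ : ι ↦ -(N : ℤ)) fun _ ↦ N) = (2 * N + 1) ^ Fintype.card ι := by
  have hside : #(Finset.Icc (-(N : ℤ)) N) = 2 * N + 1 := by rw [Int.card_Icc]; lia
  simp only [Pi.card_Icc, hside, Finset.prod_const, Finset.card_univ]

lemma card_filter_sub_single_notMem_le {ι : Type*} [Fintype ι] [DecidableEq ι]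
    {S : Finset (ι → ℤ)} {i : ι} {N : ℕ}
    (hline : ∀ k ∈ S, ∀ l ∈ S, (∀ j ≠ i, l j = k j) → l i < k i → k - Pi.single i 1 ∈ S)
    (hbox : ∀ k ∈ S, ∀ j ≠ i, |k j| ≤ N) :
    #{k ∈ S | k - Pi.single i 1 ∉ S} ≤ (2 * N + 1) ^ (Fintype.card ι - 1) := by
  have hcard : Fintype.card {j // j ≠ i} = Fintype.card ι - 1 := Set.card_ne_eq i
  rw [← hcard, ← card_Icc_neg_natCast]
  refine Finset.card_le_card_of_injOn (fun k j ↦ k j) (fun k hk ↦ ?_) fun k hk l hl hkl ↦ ?_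
  · have habs (j : {j // j ≠ i}) := abs_le.mp (hbox k (Finset.mem_filter.mp hk).1 j j.2)
    exact Finset.mem_Icc.mpr ⟨fun j ↦ (habs j).1, fun j ↦ (habs j).2⟩
  · obtain ⟨hkS, hk_out⟩ := Finset.mem_filter.mp hk
    obtain ⟨hlS, hl_out⟩ := Finset.mem_filter.mp hl
    have hoff (j : ι) (hj : j ≠ i) : k j = l j := congrFun hkl ⟨j, hj⟩
    have hon : k i = l i := le_antisymm
      (not_lt.mp fun hlt ↦ hk_out (hline k hkS l hlS (fun j hj ↦ (hoff j hj).symm) hlt))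
      (not_lt.mp fun hlt ↦ hl_out (hline l hlS k hkS hoff hlt))
    exact funext fun j ↦ (eq_or_ne j i).elim (fun hj ↦ hj ▸ hon) (hoff j)

variable {d : ℕ}

lemma euclNormZ_mono {m n : Fin d → ℤ} (h : ∀ j, |m j| ≤ |n j|) : euclNormZ m ≤ euclNormZ n :=
  Real.sqrt_le_sqrt <| Finset.sum_le_sum fun j _ ↦ sq_le_sq.mpr (by exact_mod_cast h j)

lemma abs_le_euclNormZ (n : Fin d → ℤ) (j : Fin d) : |(n j : ℝ)| ≤ euclNormZ n :=
  Real.abs_le_sqrt <| Finset.single_le_sum (f := fun j ↦ (n j : ℝ) ^ 2)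
    (fun _ _ ↦ sq_nonneg _) (Finset.mem_univ j)

lemma euclNormZ_le_sqrt_mul {n : Fin d → ℤ} {r : ℝ} (hr : 0 ≤ r) (h : ∀ j, |(n j : ℝ)| ≤ r) :
    euclNormZ n ≤ √d * r := by
  rw [← Real.sqrt_sq hr, ← Real.sqrt_mul d.cast_nonneg]
  refine Real.sqrt_le_sqrt ?_
  calc ∑ j, (n j : ℝ) ^ 2 ≤ ∑ _j : Fin d, r ^ 2 :=
        Finset.sum_le_sum fun j _ ↦ sq_le_sq' (abs_le.mp (h j)).1 (abs_le.mp (h j)).2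
    _ = d * r ^ 2 := by simp

lemma euclNormZ_sub_single_le_max {k l : Fin d → ℤ} {i : Fin d} (hoff : ∀ j ≠ i, l j = k j)
    (hlt : l i < k i) : euclNormZ (k - Pi.single i 1) ≤ max (euclNormZ l) (euclNormZ k) := by
  have hi : |k i - 1| ≤ max |l i| |k i| := abs_le_max_abs_abs (by lia) (by lia)
  refine le_max_iff.mpr ((le_max_iff.mp hi).imp (fun h ↦ ?_) fun h ↦ ?_) <;>
  · refine euclNormZ_mono fun j ↦ ?_
    obtain rfl | hj := eq_or_ne j i
    · simpa using h
    · simp [hj, hoff]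

variable {S : Finset (Fin d → ℤ)} {Λ : ℝ} (hS : ∀ n, n ∈ S ↔ euclNormZ n ≤ Λ)
include hS

lemma nonempty_of_mem_iff_euclNormZ_le (hΛ : 0 ≤ Λ) : S.Nonempty :=
  ⟨0, (hS 0).mpr (by simpa [euclNormZ] using hΛ)⟩

lemma pow_le_card_of_mem_iff_euclNormZ_le (hΛ : 0 ≤ Λ) : (Λ / √d) ^ d ≤ #S := by
  set N : ℕ := ⌊Λ / √d⌋₊
  have hN : (N : ℝ) ≤ Λ / √d := Nat.floor_le (by positivity)
  have hbox : Finset.Icc (fun _ ↦ -(N : ℤ)) (fun _ ↦ N) ⊆ S := by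
    intro k hk
    obtain ⟨hlo, hhi⟩ := Finset.mem_Icc.mp hk
    have habs (j : Fin d) : |(k j : ℝ)| ≤ N := by exact_mod_cast abs_le.mpr ⟨hlo j, hhi j⟩
    refine (hS k).mpr ((euclNormZ_le_sqrt_mul N.cast_nonneg habs).trans ?_)
    calc √d * N ≤ √d * (Λ / √d) := by gcongr
      _ ≤ Λ := by rw [mul_div_left_comm]; exact mul_le_of_le_one_right hΛ (div_self_le_one _)
  have hcard : ((2 * N + 1 : ℝ)) ^ d ≤ #S := by
    have := Finset.card_le_card hbox
    rw [card_Icc_neg_natCast, Fintype.card_fin] at this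
    exact_mod_cast this
  refine (pow_le_pow_left₀ (by positivity) ?_ d).trans hcard
  linarith [Nat.lt_floor_add_one (Λ / √d), N.cast_nonneg (α := ℝ)]

lemma card_filter_sub_single_notMem_le_of_mem_iff_euclNormZ_le (hΛ : 0 ≤ Λ) (i : Fin d) :
    (#{k ∈ S | k - Pi.single i 1 ∉ S} : ℝ) ≤ (2 * Λ + 1) ^ (d - 1) := by
  have hbox : ∀ k ∈ S, ∀ j ≠ i, |k j| ≤ ⌊Λ⌋₊ := fun k hk j _ ↦ by
    rw [Int.abs_eq_natAbs, Nat.cast_le]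
    refine Nat.le_floor ?_
    rw [Nat.cast_natAbs, Int.cast_abs]
    exact (abs_le_euclNormZ k j).trans ((hS k).mp hk)
  have hcount : #{k ∈ S | k - Pi.single i 1 ∉ S} ≤ (2 * ⌊Λ⌋₊ + 1) ^ (d - 1) := by
    simpa only [Fintype.card_fin] using card_filter_sub_single_notMem_le
      (fun k hk l hl hoff hlt ↦ (hS _).mpr <| (euclNormZ_sub_single_le_max hoff hlt).trans <|
        max_le ((hS l).mp hl) ((hS k).mp hk)) hbox
  calc (#{k ∈ S | k - Pi.single i 1 ∉ S} : ℝ) ≤ (2 * ⌊Λ⌋₊ + 1) ^ (d - 1) := by exact_mod_cast hcount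
    _ ≤ (2 * Λ + 1) ^ (d - 1) := by gcongr; exact Nat.floor_le hΛ

lemma boundaryRatio_single_le_of_mem_iff_euclNormZ_le (hΛ : 1 ≤ Λ) (i : Fin d) :
    boundaryRatio S (Pi.single i 1) ≤ 3 ^ (d - 1) * √d ^ d / Λ := by
  have hΛ0 : 0 < Λ := one_pos.trans_le hΛ
  have hd : (0 : ℝ) < d := by exact_mod_cast i.pos
  have hpow : Λ ^ d = Λ ^ (d - 1) * Λ := (pow_sub_one_mul i.pos.ne' Λ).symm
  calc boundaryRatio S (Pi.single i 1) ≤ (2 * Λ + 1) ^ (d - 1) / (Λ / √d) ^ d := by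
        unfold boundaryRatio
        gcongr
        · exact card_filter_sub_single_notMem_le_of_mem_iff_euclNormZ_le hS hΛ0.le i
        · exact pow_le_card_of_mem_iff_euclNormZ_le hS hΛ0.le
    _ ≤ (3 * Λ) ^ (d - 1) / (Λ / √d) ^ d := by gcongr; linarith
    _ = 3 ^ (d - 1) * √d ^ d / Λ := by
        rw [div_pow, hpow, mul_pow]
        field_simp

end LatticePoints

lemma tendsto_boundaryRatio_single {d : ℕ} {S : ℝ → Finset (Fin d → ℤ)}
    (hS : ∀ Λ n, n ∈ S Λ ↔ euclNormZ n ≤ Λ) (i : Fin d) :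
    Tendsto (fun Λ ↦ boundaryRatio (S Λ) (Pi.single i 1)) atTop (𝓝 0) :=
  squeeze_zero' (.of_forall fun _ ↦ by unfold boundaryRatio; positivity)
    ((eventually_ge_atTop 1).mono fun Λ hΛ ↦
      boundaryRatio_single_le_of_mem_iff_euclNormZ_le (hS Λ) hΛ i)
    (tendsto_const_nhds.div_atTop tendsto_id)

/-- The spectral Fejér kernel
`K_{m_Λ}(x) = (1/N_B(Λ)) |Σ_{k ∈ B̄_Λ^ℤ} e^{i k·x}|²` is a good kernel:
it is nonnegative, has total mass one, and its mass outside any fixed ball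
around `0` tends to `0` as `Λ → ∞`. -/
theorem stmt_5 (d : ℕ)
    (μ : Measure (Torus d)) [μ.IsAddHaarMeasure] [IsProbabilityMeasure μ]
    (S : ℝ → Finset (Fin d → ℤ)) (hS : ∀ Λ n, n ∈ S Λ ↔ euclNormZ n ≤ Λ)
    (K : ℝ → Torus d → ℝ)
    (hK : ∀ Λ x, K Λ x = (1 / ((S Λ).card : ℝ)) * Complex.normSq (∑ k ∈ S Λ, torusChar k x)) :
    (∀ Λ : ℝ, ∀ x : Torus d, 0 ≤ K Λ x) ∧
      (∀ Λ : ℝ, 0 < Λ → ∫ x, K Λ x ∂μ = 1) ∧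
      (∀ δ : ℝ, 0 < δ →
        Tendsto (fun Λ : ℝ => ∫ x in {x : Torus d | δ ≤ dist x 0}, K Λ x ∂μ)
          atTop (nhds 0)) := by
  obtain rfl : K = fun Λ ↦ fejerKernel (S Λ) := funext fun Λ ↦ funext (hK Λ)
  refine ⟨fun Λ ↦ fejerKernel_nonneg (S Λ), fun Λ hΛ ↦ ?_, fun δ hδ ↦ ?_⟩
  · exact integral_fejerKernel μ (nonempty_of_mem_iff_euclNormZ_le (hS Λ) hΛ.le)
  · have hclosed : IsClosed {x : Torus d | δ ≤ dist x 0} :=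
      isClosed_le continuous_const (continuous_id.dist continuous_const)
    exact tendsto_setIntegral_fejerKernel μ (tendsto_boundaryRatio_single hS) hclosed
      (by simpa using hδ)
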